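/- arXiv:2504.20894 — 2 statements merged into one kernel-verified Lean document; each statement's English description precedes it below -/
import Mathlib

section
/- Let n be a natural number and p ∈ [0,1] be such that n·p is an integer m. If X₁, …, Xₙ are independent identically distributed Bernoulli(p) random variables (taking value 1 with probability p and 0 with probability 1−p), then the probability that X₁ + ⋯ + Xₙ ≤ m is at least 1/2. -/
open MeasureTheory ProbabilityTheory

/-!
Reflect `ℤ` about `m + 1 / 2`, pairing `m + 1 + j` with `m - j`; write `U j` and `D j` for the
binomial masses of these two points. The ratio of `U s / D s` to `U (s - 1) / D (s - 1)` is
`p² ((n - m)² - s²) / ((1 - p)² ((m + 1)² - s²))`, and because `p (n - m) ≤ (1 - p) (m + 1)` the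
`s` for which it is at least `1` form an upper set. As `U 0 ≤ D 0`, the sequence `U - D` changes
sign at most once. If it does so at `t`, then `∑ (j - t) (U j - D j) ≥ 0`, which says that
`t (P(S ≤ m) - P(S > m)) ≥ m - E S + P(S > m)`; since `E S ≤ m`, the lower half has the larger
mass. If there is no sign change, this is immediate.
-/

section SingleCrossing

variable {μ : Measure ℤ} {m : ℤ}

lemma integral_nonneg_of_reflected_pairs {f : ℤ → ℝ} (hf : Integrable f μ)
    (hpair : ∀ j : ℕ, 0 ≤ μ.real {m + 1 + j} * f (m + 1 + j) + μ.real {m - j} * f (m - j)) :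
    0 ≤ ∫ z, f z ∂μ := by
  have hsum : HasSum (fun z ↦ μ.real {z} * f z) (∫ z, f z ∂μ) := by
    have := hf
    rw [← Measure.sum_smul_dirac μ] at this
    simpa [measureReal_def] using hasSum_integral_measure this
  have hshift := (Equiv.addLeft (m + 1)).hasSum_iff.mpr hsum
  refine hshift.nat_add_neg_add_one.nonneg fun j ↦ ?_
  have hreflect : m + 1 + (-((j : ℤ) + 1)) = m - j := by ring
  simpa only [Function.comp_apply, Equiv.coe_addLeft, hreflect] using hpair j

lemma integrable_sign [IsFiniteMeasure μ] :
    Integrable (fun z ↦ if z ≤ m then (1 : ℝ) else -1) μ :=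
  .of_bound .of_discrete 1 (.of_forall fun z ↦ by split_ifs <;> simp)

lemma half_le_measureReal_Iic_of_integral_sign_nonneg [IsProbabilityMeasure μ]
    (h : 0 ≤ ∫ z, (if z ≤ m then (1 : ℝ) else -1) ∂μ) : 1 / 2 ≤ μ.real (Set.Iic m) := by
  have hsign : (fun z : ℤ ↦ if z ≤ m then (1 : ℝ) else -1) =
      fun z ↦ 2 * (Set.Iic m).indicator 1 z - 1 := by
    ext z
    by_cases hz : z ≤ m <;> norm_num [Set.indicator_apply, hz]
  have hind : Integrable ((Set.Iic m).indicator (1 : ℤ → ℝ)) μ :=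
    (integrable_const (1 : ℝ)).indicator .of_discrete
  rw [hsign, integral_sub (hind.const_mul 2) (integrable_const 1), integral_const_mul,
    integral_indicator_one .of_discrete] at h
  simp only [integral_const, probReal_univ, smul_eq_mul, mul_one] at h
  linarith

theorem half_le_measureReal_Iic_of_dominated [IsProbabilityMeasure μ]
    (hdom : ∀ j : ℕ, μ.real {m + 1 + j} ≤ μ.real {m - j}) : 1 / 2 ≤ μ.real (Set.Iic m) := by
  refine half_le_measureReal_Iic_of_integral_sign_nonneg
    (integral_nonneg_of_reflected_pairs (m := m) integrable_sign fun j ↦ ?_)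
  have hr : ¬ m + 1 + (j : ℤ) ≤ m := by lia
  have hl : m - (j : ℤ) ≤ m := by lia
  simp only [hr, hl, if_true, if_false]
  linarith [hdom j]

theorem half_le_measureReal_Iic_of_single_crossing [IsProbabilityMeasure μ]
    (hint : Integrable (fun z : ℤ ↦ (z : ℝ)) μ) (hmean : ∫ z, (z : ℝ) ∂μ ≤ m)
    {t : ℕ} (ht : 0 < t) (hbelow : ∀ j < t, μ.real {m + 1 + (j : ℤ)} ≤ μ.real {m - (j : ℤ)})
    (habove : ∀ j ≥ t, μ.real {m - (j : ℤ)} ≤ μ.real {m + 1 + (j : ℤ)}) :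
    1 / 2 ≤ μ.real (Set.Iic m) := by
  apply half_le_measureReal_Iic_of_integral_sign_nonneg
  have hdev : Integrable (fun z : ℤ ↦ (z : ℝ) - m) μ := hint.sub (integrable_const _)
  have hpos : 0 ≤ ∫ z : ℤ, ((z : ℝ) - m + t * if z ≤ m then 1 else -1) ∂μ := by
    refine integral_nonneg_of_reflected_pairs (m := m)
      (hdev.add (integrable_sign.const_mul _)) fun j ↦ ?_
    have hr : ¬ m + 1 + (j : ℤ) ≤ m := by lia
    have hl : m - (j : ℤ) ≤ m := by lia
    simp only [hr, hl, if_true, if_false]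
    push_cast
    have hcross : 0 ≤ ((j : ℝ) - t) * (μ.real {m + 1 + (j : ℤ)} - μ.real {m - (j : ℤ)}) := by
      rcases lt_or_ge j t with hjt | htj
      · exact mul_nonneg_of_nonpos_of_nonpos (sub_nonpos.2 (by exact_mod_cast hjt.le))
          (sub_nonpos.2 (hbelow j hjt))
      · exact mul_nonneg (sub_nonneg.2 (by exact_mod_cast htj)) (sub_nonneg.2 (habove j htj))
    have hnonneg : 0 ≤ μ.real {m + 1 + (j : ℤ)} := measureReal_nonneg
    linarith
  rw [integral_add hdev (integrable_sign.const_mul _), integral_const_mul,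
    integral_sub hint (integrable_const _)] at hpos
  simp only [integral_const, probReal_univ, smul_eq_mul, one_mul] at hpos
  exact nonneg_of_mul_nonneg_right (by linarith) (by exact_mod_cast ht : (0 : ℝ) < t)

end SingleCrossing

section Binomial

open scoped unitInterval

variable {n m : ℕ} {p : I}

lemma binomial_real_singleton_succ (n k : ℕ) (p : I) :
    Bin(n, p).real {k + 1} * ((k + 1) * (1 - p)) = Bin(n, p).real {k} * ((n - k) * p) := by
  rw [binomial_real_singleton, binomial_real_singleton]
  rcases lt_or_ge k n with hk | hk
  · have hchoose : (n.choose (k + 1) : ℝ) * (k + 1) = n.choose k * (n - k) := by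
      rw [← Nat.cast_sub hk.le]
      exact_mod_cast Nat.choose_succ_right_eq n k
    rw [show n - k = n - (k + 1) + 1 by lia, pow_succ, pow_succ]
    linear_combination ((p : ℝ) ^ k * p * (1 - p) ^ (n - (k + 1)) * (1 - p)) * hchoose
  · rcases hk.eq_or_lt with rfl | hk <;> simp [Nat.choose_eq_zero_of_lt, *]

lemma map_cast_binomial_int_real_singleton_of_neg (n : ℕ) (p : I) {z : ℤ} (hz : z < 0) :
    Bin(ℤ, n, p).real {z} = 0 := by
  have hempty : ((↑) : ℕ → ℤ) ⁻¹' {z} = ∅ := by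
    ext k
    simpa using (hz.trans_le k.cast_nonneg).ne'
  rw [map_measureReal_apply .of_discrete .of_discrete, hempty, measureReal_empty]

lemma map_cast_binomial_int_real_singleton_add_one (n : ℕ) (p : I) (z : ℤ) :
    Bin(ℤ, n, p).real {z + 1} * ((z + 1) * (1 - p)) = Bin(ℤ, n, p).real {z} * ((n - z) * p) := by
  rcases lt_or_ge z 0 with hz | hz
  · rw [map_cast_binomial_int_real_singleton_of_neg n p hz]
    rcases eq_or_lt_of_le (Int.add_one_le_iff.2 hz) with hz | hz
    · have : (z : ℝ) + 1 = 0 := by exact_mod_cast hz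
      simp [this]
    · simp [map_cast_binomial_int_real_singleton_of_neg n p hz]
  · lift z to ℕ using hz
    have := binomial_real_singleton_succ n z p
    rw [binomial_real_singleton, binomial_real_singleton] at this
    rw [show (z : ℤ) + 1 = (z + 1 : ℕ) by simp, map_cast_binomial_real_singleton,
      map_cast_binomial_real_singleton]
    exact_mod_cast this

lemma integral_map_cast_binomial_int (n : ℕ) (p : I) : ∫ z, (z : ℝ) ∂Bin(ℤ, n, p) = n * p := by
  rw [integral_map_cast_binomial]
  have h := congr(Polynomial.eval (p : ℝ) $(bernsteinPolynomial.sum_smul ℝ n))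
  simp only [bernsteinPolynomial, nsmul_eq_mul, Polynomial.eval_finsetSum, Polynomial.eval_mul,
    Polynomial.eval_natCast, Polynomial.eval_pow, Polynomial.eval_X, Polynomial.eval_sub,
    Polynomial.eval_one] at h
  rw [← h, Nat.range_succ_eq_Iic]
  simp [mul_comm]

lemma map_cast_binomial_int_real_singleton_pos_iff (hp0 : 0 < p) (hp1 : p < 1) {z : ℤ} :
    0 < Bin(ℤ, n, p).real {z} ↔ 0 ≤ z ∧ z ≤ n := by
  rcases lt_or_ge z 0 with hz | hz
  · simp [map_cast_binomial_int_real_singleton_of_neg n p hz, hz.not_ge]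
  · lift z to ℕ using hz
    have hp0' : (0 : ℝ) < p := hp0
    have hp1' : (0 : ℝ) < 1 - p := sub_pos.2 hp1
    rw [map_cast_binomial_real_singleton, mul_assoc, mul_pos_iff_of_pos_right (by positivity)]
    simp [Nat.pos_iff_ne_zero, Nat.choose_ne_zero_iff]

-- The point masses vanish off `[0, n]`, so the recurrence, and hence this identity, holds on all
-- of `ℤ` without boundary cases.
lemma map_cast_binomial_int_cross_ratio (n : ℕ) (p : I) (m : ℤ) (j : ℕ) :
    Bin(ℤ, n, p).real {m + 1 + ↑(j + 1)} * Bin(ℤ, n, p).real {m - j} *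
        ((1 - p) ^ 2 * ((m + 1) ^ 2 - (j + 1) ^ 2)) =
      Bin(ℤ, n, p).real {m + 1 + j} * Bin(ℤ, n, p).real {m - ↑(j + 1)} *
        (p ^ 2 * ((n - m) ^ 2 - (j + 1) ^ 2)) := by
  have hupper := map_cast_binomial_int_real_singleton_add_one n p (m + 1 + j)
  have hlower := map_cast_binomial_int_real_singleton_add_one n p (m - ↑(j + 1))
  rw [show m + 1 + (j : ℤ) + 1 = m + 1 + ↑(j + 1) by push_cast; ring] at hupper
  rw [show m - ((j + 1 : ℕ) : ℤ) + 1 = m - j by push_cast; ring] at hlower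
  push_cast at hupper hlower ⊢
  linear_combination congr($hupper * $hlower)

lemma mul_sub_le_mul_sub_of_le {a b c d s t : ℝ} (hcd : b * d ≤ a * c) (hs : 0 < s) (hst : s ≤ t)
    (h : a * (c - s) ≤ b * (d - s)) : a * (c - t) ≤ b * (d - t) := by
  have hab : 0 ≤ a - b := nonneg_of_mul_nonneg_left (by linarith : 0 ≤ (a - b) * s) hs
  linarith [mul_le_mul_of_nonneg_left hst hab]

lemma map_cast_binomial_int_cross_coeff_le_of_overtaking (hp0 : 0 < p) (hp1 : p < 1) {m : ℤ}
    (hm : 0 ≤ m) {j : ℕ}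
    (hle : Bin(ℤ, n, p).real {m + 1 + (j : ℤ)} ≤ Bin(ℤ, n, p).real {m - (j : ℤ)})
    (hlt : Bin(ℤ, n, p).real {m - ↑(j + 1)} < Bin(ℤ, n, p).real {m + 1 + ↑(j + 1)}) :
    (1 - p : ℝ) ^ 2 * ((m + 1) ^ 2 - (j + 1) ^ 2) ≤ p ^ 2 * ((n - m) ^ 2 - (j + 1) ^ 2) := by
  have hratio := map_cast_binomial_int_cross_ratio n p m j
  have hp0' : (0 : ℝ) < p := hp0
  have hupper : m + 1 + ↑(j + 1) ≤ (n : ℤ) :=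
    ((map_cast_binomial_int_real_singleton_pos_iff hp0 hp1).1 (measureReal_nonneg.trans_lt hlt)).2
  have hU : 0 < Bin(ℤ, n, p).real {m + 1 + (j : ℤ)} :=
    (map_cast_binomial_int_real_singleton_pos_iff hp0 hp1).2 (by lia)
  have hβ : 0 < (p : ℝ) ^ 2 * ((n - m) ^ 2 - (j + 1) ^ 2) := by
    have hjn : (j : ℝ) + 1 < n - m := by
      rw [lt_sub_iff_add_lt]
      exact_mod_cast (by lia : (j : ℤ) + 1 + m < n)
    have := pow_lt_pow_left₀ hjn (by positivity) two_ne_zero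
    exact mul_pos (by positivity) (sub_pos.2 this)
  generalize (1 - p : ℝ) ^ 2 * ((m + 1) ^ 2 - (j + 1) ^ 2) = α at *
  generalize (p : ℝ) ^ 2 * ((n - m) ^ 2 - (j + 1) ^ 2) = β at *
  by_contra! hβα
  have hα : 0 < α := hβ.trans hβα
  have hD := hU.trans_le hle
  refine hratio.not_gt ?_
  calc Bin(ℤ, n, p).real {m + 1 + (j : ℤ)} * Bin(ℤ, n, p).real {m - ↑(j + 1)} * β
      ≤ Bin(ℤ, n, p).real {m - (j : ℤ)} * Bin(ℤ, n, p).real {m - ↑(j + 1)} * α := by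
        gcongr
    _ < Bin(ℤ, n, p).real {m + 1 + ↑(j + 1)} * Bin(ℤ, n, p).real {m - (j : ℤ)} * α := by
        rw [mul_comm (Bin(ℤ, n, p).real {m - (j : ℤ)})]
        gcongr

lemma map_cast_binomial_int_overtaking_persists (hp0 : 0 < p) (hp1 : p < 1) {m : ℤ}
    (hmn : m ≤ n) {j : ℕ}
    (hcoeff : (1 - p : ℝ) ^ 2 * ((m + 1) ^ 2 - (j + 1) ^ 2) ≤
      p ^ 2 * ((n - m) ^ 2 - (j + 1) ^ 2))
    (hle : Bin(ℤ, n, p).real {m - (j : ℤ)} ≤ Bin(ℤ, n, p).real {m + 1 + (j : ℤ)}) :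
    Bin(ℤ, n, p).real {m - ↑(j + 1)} ≤ Bin(ℤ, n, p).real {m + 1 + ↑(j + 1)} := by
  rcases lt_or_ge (m - ((j + 1 : ℕ) : ℤ)) 0 with hj | hj
  · rw [map_cast_binomial_int_real_singleton_of_neg n p hj]
    exact measureReal_nonneg
  have hratio := map_cast_binomial_int_cross_ratio n p m j
  have hD : 0 < Bin(ℤ, n, p).real {m - (j : ℤ)} :=
    (map_cast_binomial_int_real_singleton_pos_iff hp0 hp1).2 (by lia)
  have hα : 0 < (1 - p : ℝ) ^ 2 * ((m + 1) ^ 2 - (j + 1) ^ 2) := by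
    have hjm : (j : ℝ) + 1 < m + 1 := by exact_mod_cast (by lia : (j : ℤ) + 1 < m + 1)
    have := pow_lt_pow_left₀ hjm (by positivity) two_ne_zero
    have hp1' : (0 : ℝ) < 1 - p := sub_pos.2 hp1
    exact mul_pos (by positivity) (sub_pos.2 this)
  generalize (1 - p : ℝ) ^ 2 * ((m + 1) ^ 2 - (j + 1) ^ 2) = α at *
  generalize (p : ℝ) ^ 2 * ((n - m) ^ 2 - (j + 1) ^ 2) = β at *
  refine le_of_mul_le_mul_right ?_ (mul_pos hD hα)
  calc Bin(ℤ, n, p).real {m - ↑(j + 1)} * (Bin(ℤ, n, p).real {m - (j : ℤ)} * α)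
      ≤ Bin(ℤ, n, p).real {m - ↑(j + 1)} * (Bin(ℤ, n, p).real {m + 1 + (j : ℤ)} * β) := by
        gcongr
    _ = Bin(ℤ, n, p).real {m + 1 + ↑(j + 1)} * (Bin(ℤ, n, p).real {m - (j : ℤ)} * α) := by
        linear_combination -hratio

lemma map_cast_binomial_int_single_crossing (hp0 : 0 < p) (hp1 : p < 1) {m : ℤ} (hmn : m ≤ n)
    (hm : n * (p : ℝ) ≤ m) {i : ℕ}
    (hle : Bin(ℤ, n, p).real {m + 1 + (i : ℤ)} ≤ Bin(ℤ, n, p).real {m - (i : ℤ)})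
    (hlt : Bin(ℤ, n, p).real {m - ↑(i + 1)} < Bin(ℤ, n, p).real {m + 1 + ↑(i + 1)})
    (j : ℕ) (hij : i + 1 ≤ j) :
    Bin(ℤ, n, p).real {m - (j : ℤ)} ≤ Bin(ℤ, n, p).real {m + 1 + (j : ℤ)} := by
  have hp0' : (0 : ℝ) < p := hp0
  have hp1' : (0 : ℝ) < 1 - p := sub_pos.2 hp1
  have hm0 : (0 : ℝ) ≤ m := le_trans (by positivity) hm
  have hnm : (0 : ℝ) ≤ n - m := sub_nonneg.2 (by exact_mod_cast hmn)
  have hcoeff := map_cast_binomial_int_cross_coeff_le_of_overtaking hp0 hp1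
    (by exact_mod_cast hm0) hle hlt
  have hodds : (p : ℝ) ^ 2 * (n - m) ^ 2 ≤ (1 - p) ^ 2 * (m + 1) ^ 2 := by
    rw [← mul_pow, ← mul_pow]
    exact pow_le_pow_left₀ (by positivity) (by linarith) 2
  induction j, hij using Nat.le_induction with
  | base => exact hlt.le
  | succ j hij ih =>
    refine map_cast_binomial_int_overtaking_persists hp0 hp1 hmn ?_ ih
    refine mul_sub_le_mul_sub_of_le hodds (by positivity) ?_ hcoeff
    gcongr
    lia

lemma map_cast_binomial_int_real_singleton_add_one_le (hp1 : p < 1) {m : ℤ}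
    (hm : n * (p : ℝ) ≤ m) : Bin(ℤ, n, p).real {m + 1} ≤ Bin(ℤ, n, p).real {m} := by
  have hp0' : (0 : ℝ) ≤ p := p.2.1
  have hp1' : (0 : ℝ) < 1 - p := sub_pos.2 hp1
  have hm0 : (0 : ℝ) ≤ m := le_trans (by positivity) hm
  refine le_of_mul_le_mul_right ?_ (by positivity : 0 < ((m : ℝ) + 1) * (1 - p))
  rw [map_cast_binomial_int_real_singleton_add_one]
  exact mul_le_mul_of_nonneg_left (by linarith) measureReal_nonneg

theorem half_le_map_cast_binomial_int_real_Iic (hp0 : 0 < p) (hp1 : p < 1) {m : ℤ} (hmn : m ≤ n)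
    (hm : n * (p : ℝ) ≤ m) : 1 / 2 ≤ Bin(ℤ, n, p).real (Set.Iic m) := by
  by_cases hdom : ∀ j : ℕ, Bin(ℤ, n, p).real {m + 1 + (j : ℤ)} ≤ Bin(ℤ, n, p).real {m - (j : ℤ)}
  · exact half_le_measureReal_Iic_of_dominated hdom
  simp only [not_forall, not_le] at hdom
  classical
  obtain ⟨t, hlt, hbelow⟩ : ∃ t : ℕ,
      Bin(ℤ, n, p).real {m - (t : ℤ)} < Bin(ℤ, n, p).real {m + 1 + (t : ℤ)} ∧ ∀ j < t,
      Bin(ℤ, n, p).real {m + 1 + (j : ℤ)} ≤ Bin(ℤ, n, p).real {m - (j : ℤ)} :=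
    ⟨Nat.find hdom, Nat.find_spec hdom, fun j hj ↦ not_lt.1 (Nat.find_min hdom hj)⟩
  cases t with
  | zero =>
    simp only [Nat.cast_zero, sub_zero, add_zero] at hlt
    exact absurd hlt (map_cast_binomial_int_real_singleton_add_one_le hp1 hm).not_gt
  | succ i =>
    refine half_le_measureReal_Iic_of_single_crossing (integrable_map_cast_binomial _) ?_
      i.succ_pos hbelow (map_cast_binomial_int_single_crossing hp0 hp1 hmn hm
        (hbelow i i.lt_succ_self) hlt)
    rwa [integral_map_cast_binomial_int]

lemma map_cast_binomial_real_Iic {R : Type*} [AddMonoidWithOne R] [PartialOrder R] [CharZero R]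
    [AddLeftMono R] [ZeroLEOneClass R] [TopologicalSpace R] [OrderClosedTopology R]
    [MeasurableSpace R] [OpensMeasurableSpace R] (n m : ℕ) (p : I) :
    Bin(R, n, p).real (Set.Iic (m : R)) = Bin(n, p).real (Set.Iic m) := by
  rw [map_measureReal_apply .of_discrete measurableSet_Iic]
  congr
  ext k
  simp

lemma binomial_real_Iic_of_le (p : I) (hnm : n ≤ m) : Bin(n, p).real (Set.Iic m) = 1 := by
  rw [measureReal_def, (mem_ae_iff_prob_eq_one measurableSet_Iic).1, ENNReal.toReal_one]
  exact (ae_le_of_hasLaw_binomial HasLaw.id).mono fun k hk ↦ hk.trans hnm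

theorem half_le_binomial_real_Iic (hm : n * (p : ℝ) ≤ m) :
    1 / 2 ≤ Bin(n, p).real (Set.Iic m) := by
  rcases le_or_gt n m with hnm | hmn
  · norm_num [binomial_real_Iic_of_le p hnm]
  rcases (unitInterval.nonneg' (t := p)).eq_or_lt with rfl | hp0
  · have hzero : Bin(n, 0).real {0} ≤ Bin(n, 0).real (Set.Iic m) := measureReal_mono (by simp)
    rw [binomial_real_zero, Set.Icc.coe_zero, sub_zero, one_pow] at hzero
    linarith
  have hp1 : p < 1 := by
    refine unitInterval.le_one'.lt_of_ne ?_
    rintro rfl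
    exact hmn.not_ge (by simpa using hm)
  rw [← map_cast_binomial_real_Iic (R := ℤ)]
  exact half_le_map_cast_binomial_int_real_Iic hp0 hp1 (by exact_mod_cast hmn.le)
    (by exact_mod_cast hm)

end Binomial

section Law

open scoped unitInterval

variable {Ω : Type*} [MeasurableSpace Ω] {P : Measure Ω} {p : I}

lemma hasLaw_bernoulliMeasure [IsProbabilityMeasure P] {E : Type*} [MeasurableSpace E]
    [MeasurableSingletonClass E] {X : Ω → E} {x y : E} (hX : AEMeasurable X P) (hxy : x ≠ y)
    (hx : P (X ⁻¹' {x}) = ENNReal.ofReal p) (hy : P (X ⁻¹' {y}) = ENNReal.ofReal (1 - p)) :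
    HasLaw X Ber(x, y, p) P := by
  have hmx : NullMeasurableSet (X ⁻¹' {x}) P :=
    hX.nullMeasurableSet_preimage (measurableSet_singleton x)
  have hmy : NullMeasurableSet (X ⁻¹' {y}) P :=
    hX.nullMeasurableSet_preimage (measurableSet_singleton y)
  have hdisj : Disjoint (X ⁻¹' {x}) (X ⁻¹' {y}) := (Set.disjoint_singleton.2 hxy).preimage X
  have hone : P (X ⁻¹' {x} ∪ X ⁻¹' {y}) = 1 := by
    rw [measure_union₀ hmy hdisj.aedisjoint, hx, hy,
      ← ENNReal.ofReal_add p.2.1 (sub_nonneg.2 p.2.2), add_sub_cancel, ENNReal.ofReal_one]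
  have hae : ∀ᵐ ω ∂P, X ω = x ∨ X ω = y :=
    (prob_compl_eq_zero_iff₀ (hmx.union hmy)).2 hone
  refine ⟨hX, ?_⟩
  rw [(Measure.ae_eq_or_eq_iff_map_eq_dirac_add_dirac hX hxy).1 hae]
  have hp (q : I) : ENNReal.ofReal q = unitInterval.toNNReal q :=
    ENNReal.ofReal_eq_coe_nnreal q.2.1
  rw [hx, hy, ← unitInterval.coe_symm_eq, hp, hp]
  rfl

lemma hasLaw_sum_binomial {ι : Type*} [Fintype ι] {X : ι → Ω → ℝ} (hindep : iIndepFun X P)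
    (hX : ∀ i, HasLaw (X i) Ber(1, 0, p) P) :
    HasLaw (fun ω ↦ ∑ i, X i ω) Bin(ℝ, Fintype.card ι, p) P where
  aemeasurable := Finset.aemeasurable_fun_sum _ fun i _ ↦ (hX i).aemeasurable
  map_eq := by
    have := hindep.isProbabilityMeasure
    refine Measure.ext_of_charFun ?_
    rw [hindep.charFun_map_fun_sum_eq_prod fun i ↦ (hX i).aemeasurable]
    ext t
    simp only [(hX _).map_eq, Finset.prod_const, Finset.card_univ, Pi.pow_apply,
      charFun_apply_real, integral_bernoulliMeasure, integral_map_cast_binomial]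
    rw [Complex.real_smul, Complex.real_smul, add_pow, Nat.range_succ_eq_Iic]
    refine Finset.sum_congr rfl fun k _ ↦ ?_
    have hexp : Complex.exp (t * k * Complex.I) = Complex.exp (t * Complex.I) ^ k := by
      rw [← Complex.exp_nat_mul]
      ring_nf
    simp only [Complex.ofReal_one, mul_one, mul_pow, Complex.ofReal_sub, Complex.ofReal_zero,
      mul_zero, zero_mul, Complex.exp_zero, Complex.ofReal_natCast, hexp, Complex.real_smul,
      Complex.ofReal_mul, Complex.ofReal_pow]
    ring

end Law

theorem binomial_median_le_mean_general {ι Ω : Type*} [Fintype ι] [MeasurableSpace Ω]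
    (P : Measure Ω) [IsProbabilityMeasure P] (m : ℕ) (p : ℝ) (hp0 : 0 ≤ p) (hp1 : p ≤ 1)
    (hm : Fintype.card ι * p ≤ m) (X : ι → Ω → ℝ) (hX : ∀ i, AEMeasurable (X i) P)
    (hindep : iIndepFun X P) (h1 : ∀ i, P {ω | X i ω = 1} = ENNReal.ofReal p)
    (h0 : ∀ i, P {ω | X i ω = 0} = ENNReal.ofReal (1 - p)) :
    (1 : ENNReal) / 2 ≤ P {ω | ∑ i, X i ω ≤ m} := by
  lift p to Set.Icc (0 : ℝ) 1 using ⟨hp0, hp1⟩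
  have hlaw : HasLaw (fun ω ↦ ∑ i, X i ω) Bin(ℝ, Fintype.card ι, p) P :=
    hasLaw_sum_binomial hindep fun i ↦ hasLaw_bernoulliMeasure (hX i) one_ne_zero (h1 i) (h0 i)
  have hprob : 1 / 2 ≤ P.real {ω | ∑ i, X i ω ≤ m} := by
    rw [hlaw.measureReal_eq measurableSet_Iic, Set.Iic_def, map_cast_binomial_real_Iic]
    exact half_le_binomial_real_Iic hm
  calc (1 : ENNReal) / 2 = ENNReal.ofReal (1 / 2) := by
        rw [ENNReal.ofReal_div_of_pos two_pos, ENNReal.ofReal_one, ENNReal.ofReal_ofNat]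
    _ ≤ P {ω | ∑ i, X i ω ≤ m} := ENNReal.ofReal_le_of_le_toReal hprob

/-- If `X₁, …, Xₙ` are i.i.d. Bernoulli(p) random variables and the mean `n·p` is an
integer `m`, then `P(X₁ + ⋯ + Xₙ ≤ m) ≥ 1/2` (the median of a binomial is at most its
mean when the mean is an integer). -/
theorem binomial_median_le_mean
    {Ω : Type*} [MeasurableSpace Ω] (P : Measure Ω) [IsProbabilityMeasure P]
    (n m : ℕ) (p : ℝ) (hp0 : 0 ≤ p) (hp1 : p ≤ 1) (hm : (n : ℝ) * p = (m : ℝ))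
    (X : Fin n → Ω → ℝ) (hmeas : ∀ i, Measurable (X i))
    (hindep : iIndepFun X P)
    (h1 : ∀ i, P {ω | X i ω = 1} = ENNReal.ofReal p)
    (h0 : ∀ i, P {ω | X i ω = 0} = ENNReal.ofReal (1 - p)) :
    (1 : ENNReal) / 2 ≤ P {ω | (∑ i, X i ω) ≤ (m : ℝ)} :=
  binomial_median_le_mean_general P m p hp0 hp1 (by rw [Fintype.card_fin, hm]) X
    (fun i ↦ (hmeas i).aemeasurable) hindep h1 h0
end

section
/- Let K ≥ 4 be a multiple of 4, let ε ∈ [1/2, 1), and let n be a natural number with n·(1−ε) = K/4. Consider the probability space Ω = ({0,1}^ℕ) × {1,…,K} equipped with the product of the infinite i.i.d. Bernoulli(ε) measure (coordinate e_t equals 1, 'erased', with probability ε) and the uniform measure on {1,…,K} (giving the initial arm ã₀ = u). Let π be any deterministic policy, i.e., any function from finite histories (lists of triples (requested arm, erasure bit, reward bit)) to arms in {1,…,K}. For each instance index i ∈ {1,…,K}, define the process on Ω recursively for t = 1,…,n: a_t = π(h_{t−1}) with h₀ the empty history; ã_t = ã_{t−1} if e_t = 1 and ã_t = a_t if e_t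 = 0; r_t = 1 if ã_t = i and r_t = 0 otherwise; h_t = h_{t−1} appended with (a_t, e_t, r_t). Define the regret R_i(ω) = |{t ∈ {1,…,n} : ã_t ≠ i}|. Then there exists an instance i ∈ {1,…,K} such that the expectation of R_i is at least n/8 = K/(32·(1−ε)). -/
/-!
The erasure bits carry no information about the instance, so as long as all rewards are zero the
history is, for fixed erasures and initial arm, the same in every instance. Along this common
history only the initial arm and the arms requested in non-erased rounds can be played; hence all
but `1 + #{non-erased rounds}` of the instances incur the full regret `n`. The expected number of
non-erased rounds is `n * (1 - ε)`, and averaging over the `K` instances produces one with expected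
regret at least `n * (1 - (1 + n * (1 - ε)) / K)`.
-/

open MeasureTheory ProbabilityTheory

/-- A deterministic policy: a map from finite histories, i.e. lists of triples
(requested arm, erasure bit, reward bit), to the next requested arm. -/
def ErasurePolicy (K : ℕ) : Type := List (Fin K × Bool × Bool) → Fin K

/-- The state of the interaction after `t` rounds in instance `i` (where arm `i` gives
reward `1` and all other arms give reward `0`), for policy `π`, erasure sequence `e`
(`e t = true` means round `t+1` is erased) and uniformly drawn initial arm `u`.
The state consists of the history of triples (requested arm, erasure bit, reward bit)
and the arm currently played by the agent:
`a_t = π(h_{t-1})`, `ã_t = ã_{t-1}` if erased and `ã_t = a_t` otherwise,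
`r_t = 1` iff `ã_t = i`. -/
def erasureState (K : ℕ) (π : ErasurePolicy K) (i : Fin K) (e : ℕ → Bool) (u : Fin K) :
    ℕ → List (Fin K × Bool × Bool) × Fin K
  | 0 => ([], u)
  | t + 1 =>
      let s := erasureState K π i e u t
      let a := π s.1
      let er := e t
      let pl := if er then s.2 else a
      (s.1 ++ [(a, er, decide (pl = i))], pl)

/-- The regret of policy `π` in instance `i` over horizon `n`, on the sample point
`ω = (erasure sequence, initial arm)`: the number of rounds `t ∈ {1,…,n}` in which the
actually played arm `ã_t` differs from the unique rewarding arm `i`. -/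
def erasureRegret (n K : ℕ) (π : ErasurePolicy K) (i : Fin K)
    (ω : (Fin n → Bool) × Fin K) : ℕ :=
  ((Finset.range n).filter fun t =>
    (erasureState K π i (fun s => if h : s < n then ω.1 ⟨s, h⟩ else false) ω.2 (t + 1)).2
      ≠ i).card

/-- The Bernoulli(ε) measure on `Bool` (`true`, i.e. "erased", has probability `ε`). -/
noncomputable def bernoulliMeasure (ε : ℝ) : Measure Bool :=
  ENNReal.ofReal ε • Measure.dirac true + ENNReal.ofReal (1 - ε) • Measure.dirac false

/-- The law of `ω`: the product of the i.i.d. Bernoulli(ε) measure on the erasure bits of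
the `n` rounds and the uniform measure on the `K` possible initial arms. -/
noncomputable def erasureLaw (n K : ℕ) (ε : ℝ) : Measure ((Fin n → Bool) × Fin K) :=
  (Measure.pi fun _ : Fin n => bernoulliMeasure ε).prod
    ((K : ENNReal)⁻¹ • Measure.count)

section Trajectory

open scoped Finset

variable {K : ℕ}

/-- The history that the policy `π` generates under the erasures `e` if every reward is zero.
It is common to all instances as long as the rewarding arm has not been played. -/
def zeroRewardHistory (π : ErasurePolicy K) (e : ℕ → Bool) : ℕ → List (Fin K × Bool × Bool)
  | 0 => []
  | t + 1 => zeroRewardHistory π e t ++ [(π (zeroRewardHistory π e t), e t, false)]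

/-- The arms played in the first `t` rounds along the zero-reward history: the initial arm `u` and
the requests that are not erased. The arm `u` is included even if it is replaced in the first
round. -/
def zeroRewardArms (π : ErasurePolicy K) (e : ℕ → Bool) (u : Fin K) (t : ℕ) : Finset (Fin K) :=
  insert u ({s ∈ Finset.range t | e s = false}.image fun s => π (zeroRewardHistory π e s))

lemma zeroRewardArms_mono (π : ErasurePolicy K) (e : ℕ → Bool) (u : Fin K) :
    Monotone (zeroRewardArms π e u) := fun _ _ h =>
  Finset.insert_subset_insert _ <| Finset.image_subset_image <|
    Finset.filter_subset_filter _ <| Finset.range_mono h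

lemma request_mem_zeroRewardArms_succ (π : ErasurePolicy K) {e : ℕ → Bool} (u : Fin K) {t : ℕ}
    (ht : e t = false) : π (zeroRewardHistory π e t) ∈ zeroRewardArms π e u (t + 1) :=
  Finset.mem_insert_of_mem <| Finset.mem_image_of_mem _ <|
    Finset.mem_filter.2 ⟨Finset.self_mem_range_succ t, ht⟩

lemma card_zeroRewardArms_le (π : ErasurePolicy K) (e : ℕ → Bool) (u : Fin K) (t : ℕ) :
    #(zeroRewardArms π e u t) ≤ 1 + #{s ∈ Finset.range t | e s = false} :=
  calc #(zeroRewardArms π e u t)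
    _ ≤ _ + 1 := Finset.card_insert_le _ _
    _ ≤ _ + 1 := Nat.add_le_add_right Finset.card_image_le 1
    _ = _ := Nat.add_comm _ _

lemma erasureState_of_notMem_zeroRewardArms {π : ErasurePolicy K} {i : Fin K} {e : ℕ → Bool}
    {u : Fin K} {t : ℕ} (hi : i ∉ zeroRewardArms π e u t) :
    (erasureState K π i e u t).1 = zeroRewardHistory π e t ∧ (erasureState K π i e u t).2 ≠ i := by
  induction t with
  | zero => exact ⟨rfl, fun h => hi (h ▸ Finset.mem_insert_self _ _)⟩
  | succ t ih =>
    obtain ⟨history_eq, played_ne⟩ := ih fun h => hi (zeroRewardArms_mono π e u t.le_succ h)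
    have next_ne : (erasureState K π i e u (t + 1)).2 ≠ i := by
      cases he : e t with
      | true => simpa [erasureState, he] using played_ne
      | false =>
        have request_ne : π (zeroRewardHistory π e t) ≠ i := fun h =>
          hi (h ▸ request_mem_zeroRewardArms_succ π u he)
        simpa [erasureState, he, history_eq] using request_ne
    refine ⟨?_, next_ne⟩
    change _ ++ [(_, _, decide ((erasureState K π i e u (t + 1)).2 = i))] = _
    rw [decide_eq_false next_ne, history_eq, zeroRewardHistory]

end Trajectory

section Regret

open scoped Finset

variable {n K : ℕ}

/-- The infinite erasure sequence with first `n` bits `b`, padded with `false` as in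
`erasureRegret`. -/
def extendErasures (b : Fin n → Bool) : ℕ → Bool :=
  fun s => if h : s < n then b ⟨s, h⟩ else false

lemma card_filter_extendErasures_eq_false (b : Fin n → Bool) :
    #{s ∈ Finset.range n | extendErasures b s = false} = #{t | b t = false} := by
  rw [Finset.card_filter, Finset.card_filter, Finset.sum_range]
  simp only [extendErasures, Fin.is_lt, dite_true, Fin.eta]

lemma erasureRegret_eq_of_notMem_zeroRewardArms {π : ErasurePolicy K} {i : Fin K}
    {ω : (Fin n → Bool) × Fin K} (hi : i ∉ zeroRewardArms π (extendErasures ω.1) ω.2 n) :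
    erasureRegret n K π i ω = n := by
  have played_ne : ∀ t ∈ Finset.range n,
      (erasureState K π i (extendErasures ω.1) ω.2 (t + 1)).2 ≠ i := fun t ht =>
    (erasureState_of_notMem_zeroRewardArms fun h =>
      hi (zeroRewardArms_mono _ _ _ (Finset.mem_range.1 ht) h)).2
  exact (congrArg Finset.card (Finset.filter_true_of_mem played_ne)).trans (Finset.card_range n)

lemma mul_le_sum_erasureRegret (π : ErasurePolicy K) (ω : (Fin n → Bool) × Fin K) :
    (n : ℝ) * (K - (1 + #{t | ω.1 t = false})) ≤ ∑ i, (erasureRegret n K π i ω : ℝ) := by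
  set S := zeroRewardArms π (extendErasures ω.1) ω.2 n
  have card_S_le : (#S : ℝ) ≤ 1 + #{t | ω.1 t = false} := by
    rw [← card_filter_extendErasures_eq_false]
    exact_mod_cast card_zeroRewardArms_le π (extendErasures ω.1) ω.2 n
  have card_compl : (#Sᶜ : ℝ) = K - #S := by
    rw [Finset.card_compl, Nat.cast_sub S.card_le_univ, Fintype.card_fin]
  calc (n : ℝ) * (K - (1 + #{t | ω.1 t = false}))
    _ ≤ n * (K - #S) := by gcongr
    _ = ∑ i ∈ Sᶜ, (erasureRegret n K π i ω : ℝ) := by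
      rw [Finset.sum_congr rfl fun i hi => by
          rw [erasureRegret_eq_of_notMem_zeroRewardArms (Finset.mem_compl.1 hi)],
        Finset.sum_const, nsmul_eq_mul, card_compl, mul_comm]
    _ ≤ ∑ i, (erasureRegret n K π i ω : ℝ) :=
      Finset.sum_le_univ_sum_of_nonneg fun _ => Nat.cast_nonneg _

end Regret

section Law

open scoped Finset

variable (ε : unitInterval)

lemma bernoulliMeasure_eq_bernoulliMeasure_true_false :
    _root_.bernoulliMeasure ε = ProbabilityTheory.bernoulliMeasure true false ε := by
  rw [_root_.bernoulliMeasure, ← unitInterval.coe_symm_eq,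
    ENNReal.ofReal_eq_coe_nnreal unitInterval.nonneg',
    ENNReal.ofReal_eq_coe_nnreal unitInterval.nonneg']
  rfl

instance : IsProbabilityMeasure (_root_.bernoulliMeasure ε) := by
  rw [bernoulliMeasure_eq_bernoulliMeasure_true_false]
  infer_instance

lemma integral_card_filter_eq_false_pi (ι : Type*) [Fintype ι] :
    ∫ b, (#{t | b t = false} : ℝ) ∂(Measure.pi fun _ : ι => _root_.bernoulliMeasure ε) =
      Fintype.card ι * (1 - ε) := by
  have integral_coord (t : ι) : ∫ b, (if b t = false then (1 : ℝ) else 0)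
      ∂(Measure.pi fun _ : ι => _root_.bernoulliMeasure ε) = 1 - ε := by
    rw [integral_comp_eval (μ := fun _ : ι => _root_.bernoulliMeasure ε)
        (f := fun x : Bool => if x = false then (1 : ℝ) else 0)
        (measurable_of_finite _).aestronglyMeasurable,
      bernoulliMeasure_eq_bernoulliMeasure_true_false, integral_bernoulliMeasure]
    simp
  simp_rw [Finset.natCast_card_filter]
  rw [integral_finsetSum _ fun _ _ => Integrable.of_finite]
  simp only [integral_coord, Finset.sum_const, Finset.card_univ, nsmul_eq_mul]

instance (K : ℕ) [NeZero K] :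
    IsProbabilityMeasure ((K : ENNReal)⁻¹ • (Measure.count : Measure (Fin K))) := by
  constructor
  simp [ENNReal.inv_mul_cancel, NeZero.ne K]

variable (n : ℕ) {K : ℕ} [NeZero K]

instance : IsProbabilityMeasure (erasureLaw n K ε) :=
  inferInstanceAs (IsProbabilityMeasure (Measure.prod _ _))

lemma integral_card_filter_eq_false_erasureLaw :
    ∫ ω, (#{t | ω.1 t = false} : ℝ) ∂(erasureLaw n K ε) = n * (1 - ε) := by
  rw [erasureLaw, integral_fun_fst fun b : Fin n → Bool => (#{t | b t = false} : ℝ),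
    integral_card_filter_eq_false_pi, probReal_univ, one_smul, Fintype.card_fin]

lemma mul_le_sum_integral_erasureRegret (π : ErasurePolicy K) :
    (n : ℝ) * (K - (1 + n * (1 - ε))) ≤
      ∑ i, ∫ ω, (erasureRegret n K π i ω : ℝ) ∂(erasureLaw n K ε) := by
  have integrable (f : (Fin n → Bool) × Fin K → ℝ) : Integrable f (erasureLaw n K ε) :=
    Integrable.of_finite
  calc (n : ℝ) * (K - (1 + n * (1 - ε)))
    _ = ∫ ω, (n : ℝ) * (K - (1 + #{t | ω.1 t = false})) ∂(erasureLaw n K ε) := by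
      rw [integral_const_mul, integral_sub (integrable _) (integrable _),
        integral_add (integrable _) (integrable _), integral_card_filter_eq_false_erasureLaw]
      simp only [integral_const, probReal_univ, one_smul]
    _ ≤ ∫ ω, ∑ i, (erasureRegret n K π i ω : ℝ) ∂(erasureLaw n K ε) :=
      integral_mono (integrable _) (integrable _) (mul_le_sum_erasureRegret π)
    _ = _ := integral_finsetSum _ fun _ _ => integrable _

end Law

theorem erasure_feedback_lower_bound_general (n : ℕ) {K : ℕ} [NeZero K] {ε : ℝ} (hε0 : 0 ≤ ε)
    (hε1 : ε ≤ 1) (π : ErasurePolicy K) :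
    ∃ i : Fin K, (n : ℝ) * (1 - (1 + n * (1 - ε)) / K) ≤
      ∫ ω, (erasureRegret n K π i ω : ℝ) ∂(erasureLaw n K ε) := by
  have sum_le : ∑ _i : Fin K, (n : ℝ) * (1 - (1 + n * (1 - ε)) / K) ≤
      ∑ i, ∫ ω, (erasureRegret n K π i ω : ℝ) ∂(erasureLaw n K ε) := by
    calc ∑ _i : Fin K, (n : ℝ) * (1 - (1 + n * (1 - ε)) / K)
      _ = n * (K - (1 + n * (1 - ε))) := by
        have : (K : ℝ) ≠ 0 := NeZero.ne _
        rw [Finset.sum_const, Finset.card_fin, nsmul_eq_mul]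
        field_simp
      _ ≤ _ := mul_le_sum_integral_erasureRegret ⟨ε, hε0, hε1⟩ n π
  obtain ⟨i, -, hi⟩ := Finset.exists_le_of_sum_le Finset.univ_nonempty sum_le
  exact ⟨i, hi⟩

/-- Lower bound with erasure feedback: for `K` a multiple of `4`, `ε ∈ [1/2, 1)` and
horizon `n` with `n·(1−ε) = K/4`, every deterministic policy `π` suffers expected regret
at least `n/8 = K/(32(1−ε))` in at least one of the `K` instances. -/
theorem erasure_feedback_lower_bound
    (K : ℕ) (hK : 4 ≤ K) (hK4 : 4 ∣ K)
    (ε : ℝ) (hε0 : 1 / 2 ≤ ε) (hε1 : ε < 1)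
    (n : ℕ) (hn : (n : ℝ) * (1 - ε) = (K : ℝ) / 4)
    (π : ErasurePolicy K) :
    ∃ i : Fin K,
      (n : ℝ) / 8 ≤ ∫ ω, (erasureRegret n K π i ω : ℝ) ∂(erasureLaw n K ε) := by
  have : NeZero K := ⟨by lia⟩
  obtain ⟨i, hi⟩ := erasure_feedback_lower_bound_general n (by linarith) hε1.le π
  have arm_fraction_le : (1 + n * (1 - ε)) / K ≤ 7 / 8 := by
    have : (4 : ℝ) ≤ K := mod_cast hK
    rw [hn, div_le_iff₀ (by linarith)]
    linarith
  refine ⟨i, le_trans ?_ hi⟩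
  calc (n : ℝ) / 8
    _ = n * (1 - 7 / 8) := by ring
    _ ≤ n * (1 - (1 + n * (1 - ε)) / K) := by gcongr
end
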